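/- There is an absolute constant C > 0 such that for every integer n ≥ 2 and every ε ∈ (0, 1/2), the following holds: if H ∈ ℝ^{n×n} is a positive semidefinite Hankel matrix of the form H = V_X D_X V_X^T for a finite set X ⊂ ℝ with |x| > 1 for all x ∈ X and positive weights (a_x)_{x∈X}, then there exists a Hankel matrix Ĥ ∈ ℝ^{n×n} of rank at most C·(ln n)·ln(1/ε) with ‖H − Ĥ‖₂ ≤ ε‖H‖₂ and ‖H − Ĥ‖_F ≤ ε‖H‖_F. -/

import Mathlib

open scoped BigOperators

/-- A matrix is Hankel if its entries depend only on the sum of the indices. -/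
def IsHankel {n : ℕ} (A : Matrix (Fin n) (Fin n) ℝ) : Prop :=
  ∀ i j k l : Fin n, (i : ℕ) + (j : ℕ) = (k : ℕ) + (l : ℕ) → A i j = A k l

/-- Euclidean (ℓ₂) norm of a vector. -/
noncomputable def euclNorm {n : ℕ} (x : Fin n → ℝ) : ℝ := Real.sqrt (∑ i, x i ^ 2)

/-- Spectral norm of a matrix: supremum of ‖Ax‖₂ over the Euclidean unit ball. -/
noncomputable def specNorm {n : ℕ} (A : Matrix (Fin n) (Fin n) ℝ) : ℝ :=
  ⨆ x : {x : Fin n → ℝ // euclNorm x ≤ 1}, euclNorm (A.mulVec x.1)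

/-- Frobenius norm of a matrix. -/
noncomputable def froNorm {n : ℕ} (A : Matrix (Fin n) (Fin n) ℝ) : ℝ :=
  Real.sqrt (∑ i, ∑ j, (A i j) ^ 2)

/-- The Vandermonde matrix `V_X ∈ ℝ^{n×|X|}` whose columns are the moment vectors
`v_n(x) = (1, x, …, x^{n−1})ᵀ` for `x ∈ X`. -/
noncomputable def vandermondeX (n : ℕ) (X : Finset ℝ) : Matrix (Fin n) X ℝ :=
  Matrix.of fun (i : Fin n) (x : X) => (x : ℝ) ^ (i : ℕ)

/-- The product `V_X D_X V_Xᵀ` where `D_X = diag((a_x)_{x∈X})`. -/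
noncomputable def vdvT (n : ℕ) (X : Finset ℝ) (a : ℝ → ℝ) : Matrix (Fin n) (Fin n) ℝ :=
  vandermondeX n X * Matrix.diagonal (fun x : X => a (x : ℝ)) * (vandermondeX n X).transpose


open scoped Classical

/-- Log-scale bucketing of a set of nodes `X ⊂ [−1,1]∖{0}`:
`B₀ = {x : ln(1/|x|) ∈ [0, λ/n]}`, `B_r = {x : ln(1/|x|) ∈ (2^{r−1}λ/n, 2^r λ/n]}` for
`1 ≤ r ≤ R`, and `B_{R+1} = {x : ln(1/|x|) > 2^R λ/n}`. -/
noncomputable def bucket (X : Finset ℝ) (lam : ℝ) (n R r : ℕ) : Finset ℝ :=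
  if r = 0 then
    X.filter (fun x => 0 ≤ Real.log (1 / |x|) ∧ Real.log (1 / |x|) ≤ lam / n)
  else if r ≤ R then
    X.filter (fun x =>
      (2 : ℝ) ^ (r - 1) * lam / n < Real.log (1 / |x|) ∧
        Real.log (1 / |x|) ≤ (2 : ℝ) ^ r * lam / n)
  else
    X.filter (fun x => (2 : ℝ) ^ R * lam / n < Real.log (1 / |x|))
lemma rank_add_le_aux {n : ℕ} (A B : Matrix (Fin n) (Fin n) ℝ) :
    (A + B).rank ≤ A.rank + B.rank := by
  unfold Matrix.rank
  refine le_trans (Submodule.finrank_mono ?_) (Submodule.finrank_add_le_finrank_add_finrank _ _)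
  rintro _ ⟨x, rfl⟩
  rw [Matrix.mulVecLin_add, LinearMap.add_apply]
  exact Submodule.add_mem_sup ⟨x, rfl⟩ ⟨x, rfl⟩

noncomputable def hkm (n : ℕ) (f : ℕ → ℝ) : Matrix (Fin n) (Fin n) ℝ :=
  Matrix.of fun i j => f ((i.rev : ℕ) + (j.rev : ℕ))

def AppR (n : ℕ) (ε : ℝ) (S : Set ℝ) (r : ℕ) : Prop :=
  ∃ W : Submodule ℝ (ℕ → ℝ), (∀ f ∈ W, (hkm n f).rank ≤ r) ∧
    ∀ y ∈ S, ∃ f ∈ W, ∀ k ≤ 2 * n, |y ^ k - f k| ≤ ε * |y| ^ (k / 2)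

lemma AppR.mono {n : ℕ} {ε : ℝ} {S T : Set ℝ} {r : ℕ} (h : AppR n ε S r) (hT : T ⊆ S) :
    AppR n ε T r := by
  obtain ⟨W, h1, h2⟩ := h
  exact ⟨W, h1, fun y hy => h2 y (hT hy)⟩

lemma AppR.union {n : ℕ} {ε : ℝ} {S T : Set ℝ} {r s : ℕ} (h : AppR n ε S r)
    (h' : AppR n ε T s) : AppR n ε (S ∪ T) (r + s) := by
  obtain ⟨W, h1, h2⟩ := h
  obtain ⟨W', h1', h2'⟩ := h'
  refine ⟨W ⊔ W', ?_, ?_⟩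
  · intro f hf
    obtain ⟨g, hg, g', hg', rfl⟩ := Submodule.mem_sup.1 hf
    have : hkm n (g + g') = hkm n g + hkm n g' := by ext i j; simp [hkm]
    rw [this]
    exact (rank_add_le_aux _ _).trans (add_le_add (h1 g hg) (h1' g' hg'))
  · rintro y (hy | hy)
    · obtain ⟨f, hf, hk⟩ := h2 y hy
      exact ⟨f, Submodule.mem_sup_left hf, hk⟩
    · obtain ⟨f, hf, hk⟩ := h2' y hy
      exact ⟨f, Submodule.mem_sup_right hf, hk⟩

lemma rank_factor {n r : ℕ} (A : Matrix (Fin n) (Fin n) ℝ) (U : Matrix (Fin n) (Fin r) ℝ)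
    (V : Matrix (Fin r) (Fin n) ℝ) (h : A = U * V) : A.rank ≤ r := by
  rw [h]
  refine (Matrix.rank_mul_le_left U V).trans ?_
  simpa using Matrix.rank_le_card_width U

lemma AppR.neg {n : ℕ} {ε : ℝ} {S : Set ℝ} {r : ℕ} (h : AppR n ε S r) :
    AppR n ε {y | -y ∈ S} r := by
  obtain ⟨W, h1, h2⟩ := h
  let L : (ℕ → ℝ) →ₗ[ℝ] (ℕ → ℝ) :=
    { toFun := fun f k => (-1) ^ k * f k
      map_add' := by intro f g; ext k; simp; ring
      map_smul' := by intro c g; ext k; simp; ring }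
  refine ⟨W.map L, ?_, ?_⟩
  · rintro _ ⟨f, hf, rfl⟩
    let D : Matrix (Fin n) (Fin n) ℝ := Matrix.diagonal fun i => (-1 : ℝ) ^ (i.rev : ℕ)
    have : hkm n (L f) = D * hkm n f * D := by
      ext i j
      simp only [D, Matrix.mul_diagonal, Matrix.diagonal_mul]
      simp only [hkm, L, Matrix.of_apply, LinearMap.coe_mk, AddHom.coe_mk, pow_add]
      ring
    rw [this]
    exact (Matrix.rank_mul_le_left _ _).trans ((Matrix.rank_mul_le_right _ _).trans (h1 f hf))
  · intro y hy
    obtain ⟨f, hf, hk⟩ := h2 (-y) hy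
    refine ⟨L f, ⟨f, hf, rfl⟩, fun k hk' => ?_⟩
    have := hk k hk'
    rw [abs_neg] at this
    refine le_trans (le_of_eq ?_) this
    have e : y ^ k - L f k = (-1) ^ k * ((-y) ^ k - f k) := by
      have : (-1 : ℝ) ^ k * (-y) ^ k = y ^ k := by rw [← mul_pow]; simp
      rw [mul_sub, this]; rfl
    rw [e, abs_mul]; simp

lemma app_tail {n K : ℕ} {ε : ℝ} (h : ((1 : ℝ) / 2) ^ K ≤ ε) :
    AppR n ε {y | 0 < y ∧ y ≤ 1 / 4} K := by
  let W : Submodule ℝ (ℕ → ℝ) :=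
    { carrier := {f | ∀ k, K ≤ k → f k = 0}
      add_mem' := by intro f g hf hg k hk; simp [hf k hk, hg k hk]
      zero_mem' := by intro k hk; rfl
      smul_mem' := by intro c f hf k hk; simp [hf k hk] }
  refine ⟨W, ?_, ?_⟩
  · intro f hf
    refine rank_factor _ (Matrix.of fun i a => if (i.rev : ℕ) = (a : ℕ) then 1 else 0)
      (Matrix.of fun a j => f ((a : ℕ) + (j.rev : ℕ))) ?_
    ext i j
    simp only [hkm, Matrix.mul_apply, Matrix.of_apply]
    by_cases hi : (i.rev : ℕ) < K
    · rw [Finset.sum_eq_single (⟨i.rev, hi⟩ : Fin K)]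
      · simp
      · intro b _ hb
        rw [if_neg, zero_mul]
        intro h'; apply hb; ext; exact h'.symm
      · simp
    · rw [Finset.sum_eq_zero, hf _ (by omega)]
      intro a _
      rw [if_neg, zero_mul]
      have := a.2
      omega
  · rintro y ⟨hy, hy'⟩
    refine ⟨fun k => if k < K then y ^ k else 0, ?_, fun k _ => ?_⟩
    · intro k hk
      simp only [if_neg (not_lt.2 hk)]
    · have hε : 0 ≤ ε := le_trans (by positivity) h
      by_cases hk : k < K
      · simp only [if_pos hk, sub_self, abs_zero]; positivity
      · simp only [if_neg hk, sub_zero, abs_of_pos hy, abs_of_pos (pow_pos hy k)]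
        have e : y ^ k = y ^ (k - k / 2) * y ^ (k / 2) := by
          rw [← pow_add]; congr 1; omega
        rw [e]
        refine mul_le_mul_of_nonneg_right ?_ (by positivity)
        calc y ^ (k - k / 2) ≤ (1 / 4) ^ (k - k / 2) := by gcongr
          _ = (1 / 2) ^ (2 * (k - k / 2)) := by rw [pow_mul]; norm_num
          _ ≤ (1 / 2) ^ K := pow_le_pow_of_le_one (by norm_num) (by norm_num) (by omega)
          _ ≤ ε := h

lemma exp_tail_nonneg (w : ℝ) (hw : 0 ≤ w) (M : ℕ) :
    Real.exp w - ∑ m ∈ Finset.range M, w ^ m / (m.factorial : ℝ) ≤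
      (1 / 2) ^ M * Real.exp (2 * w) := by
  have s1 := Real.summable_pow_div_factorial w
  have s2 := Real.summable_pow_div_factorial (2 * w)
  have e1 : Real.exp w = ∑' m : ℕ, w ^ m / (m.factorial : ℝ) := by
    rw [Real.exp_eq_exp_ℝ, NormedSpace.exp_eq_tsum_div]
  have e2 : Real.exp (2 * w) = ∑' m : ℕ, (2 * w) ^ m / (m.factorial : ℝ) := by
    rw [Real.exp_eq_exp_ℝ, NormedSpace.exp_eq_tsum_div]
  rw [e1, e2, ← s1.sum_add_tsum_nat_add M, add_sub_cancel_left, ← s2.sum_add_tsum_nat_add M,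
    mul_add, ← tsum_mul_left]
  have s1' := (summable_nat_add_iff M).2 s1
  have s2' := ((summable_nat_add_iff M).2 s2).mul_left ((1 / 2 : ℝ) ^ M)
  have := s1'.tsum_le_tsum (g := fun m => (1 / 2 : ℝ) ^ M * ((2 * w) ^ (m + M) /
    ((m + M).factorial : ℝ))) (fun m => by
      rw [mul_pow, pow_add 2 m M, ← mul_div_assoc]
      gcongr
      have : (1 / 2 : ℝ) ^ M * (2 ^ m * 2 ^ M * w ^ (m + M)) = 2 ^ m * w ^ (m + M) := by
        have : (1 / 2 : ℝ) ^ M * 2 ^ M = 1 := by rw [← mul_pow]; norm_num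
        linear_combination (2 ^ m * w ^ (m + M)) * this
      rw [this]
      exact le_mul_of_one_le_left (by positivity) (one_le_pow₀ (by norm_num))) s2'
  have p : 0 ≤ (1 / 2 : ℝ) ^ M * ∑ i ∈ Finset.range M, (2 * w) ^ i / (i.factorial : ℝ) := by
    positivity
  linarith

lemma exp_tail (w : ℝ) (M : ℕ) :
    |Real.exp w - ∑ m ∈ Finset.range M, w ^ m / (m.factorial : ℝ)| ≤
      (1 / 2) ^ M * Real.exp (2 * |w|) := by
  refine le_trans ?_ (exp_tail_nonneg |w| (abs_nonneg _) M)
  have := Complex.norm_exp_sub_sum_le_exp_norm_sub_sum (w : ℂ) M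
  have e : Complex.exp (w : ℂ) - ∑ m ∈ Finset.range M, (w : ℂ) ^ m / (m.factorial : ℂ) =
    ((Real.exp w - ∑ m ∈ Finset.range M, w ^ m / (m.factorial : ℝ) : ℝ) : ℂ) := by
    push_cast; rfl
  rw [e] at this
  simpa only [Complex.norm_real, Real.norm_eq_abs] using this

lemma app_taylor {n M : ℕ} {ε τ : ℝ} (S : Set ℝ) (hM : (1 / 2 : ℝ) ^ M * Real.exp 1 ≤ ε)
    (hS : ∀ t ∈ S, ∀ k : ℕ, k ≤ 2 * n →
      -((k : ℝ) * τ) + 2 * (k * |t - τ|) ≤ 1 - k * t / 2) (hS0 : ∀ t ∈ S, 0 ≤ t) :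
    AppR n ε {y | ∃ t ∈ S, y = Real.exp (-t)} M := by
  let L : (Fin M → ℝ) →ₗ[ℝ] (ℕ → ℝ) :=
    { toFun := fun c k => (∑ m : Fin M, c m * (k : ℝ) ^ (m : ℕ)) * Real.exp (-τ) ^ k
      map_add' := by
        intro f g; ext k; simp only [Pi.add_apply, add_mul, Finset.sum_add_distrib]
      map_smul' := by
        intro c g; ext k
        simp only [Pi.smul_apply, smul_eq_mul, RingHom.id_apply, ← mul_assoc, Finset.mul_sum] }
  refine ⟨LinearMap.range L, ?_, ?_⟩
  · rintro _ ⟨c, rfl⟩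
    refine rank_factor _
      (Matrix.of fun i a => ((i.rev : ℕ) : ℝ) ^ (a : ℕ) * Real.exp (-τ) ^ (i.rev : ℕ))
      (Matrix.of fun a j => (∑ m : Fin M, c m * (((j.rev : ℕ) : ℝ) ^ ((m : ℕ) - (a : ℕ)) *
        ((m : ℕ).choose (a : ℕ) : ℝ))) * Real.exp (-τ) ^ (j.rev : ℕ)) ?_
    ext i j
    simp only [hkm, Matrix.mul_apply, Matrix.of_apply, L, LinearMap.coe_mk, AddHom.coe_mk]
    have key : ∀ m : Fin M, (((i.rev : ℕ) + (j.rev : ℕ) : ℕ) : ℝ) ^ (m : ℕ) =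
        ∑ a : Fin M, ((i.rev : ℕ) : ℝ) ^ (a : ℕ) * (((j.rev : ℕ) : ℝ) ^ ((m : ℕ) - (a : ℕ)) *
        ((m : ℕ).choose (a : ℕ) : ℝ)) := by
      intro m
      rw [Nat.cast_add, add_pow]
      rw [Fin.sum_univ_eq_sum_range (fun a => ((i.rev : ℕ) : ℝ) ^ a *
        (((j.rev : ℕ) : ℝ) ^ ((m : ℕ) - a) * ((m : ℕ).choose a : ℝ))) M]
      simp only [mul_assoc]
      refine Finset.sum_subset (Finset.range_subset_range.2 m.2) ?_
      intro a _ ha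
      rw [Nat.choose_eq_zero_of_lt]
      · simp
      · simpa using ha
    simp only [key, Finset.mul_sum, Finset.sum_mul, pow_add]
    rw [Finset.sum_comm]
    refine Finset.sum_congr rfl fun a _ => Finset.sum_congr rfl fun m _ => ?_
    ring
  · rintro _ ⟨t, ht, rfl⟩
    refine ⟨L fun m => (τ - t) ^ (m : ℕ) / ((m : ℕ).factorial : ℝ), ⟨_, rfl⟩, fun k hk => ?_⟩
    have e : Real.exp (-t) ^ k - L (fun m => (τ - t) ^ (m : ℕ) / ((m : ℕ).factorial : ℝ)) k =
        Real.exp (-(k * τ)) * (Real.exp (k * (τ - t)) -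
          ∑ m ∈ Finset.range M, (k * (τ - t)) ^ m / (m.factorial : ℝ)) := by
      simp only [L, LinearMap.coe_mk, AddHom.coe_mk]
      rw [Fin.sum_univ_eq_sum_range (fun m => (τ - t) ^ m / (m.factorial : ℝ) * (k : ℝ) ^ m) M]
      rw [mul_sub, ← Real.exp_add, ← Real.exp_nat_mul, ← Real.exp_nat_mul, mul_comm (∑ m ∈ _, _)]
      congr 2
      · ring
      · ring_nf
      · refine Finset.sum_congr rfl fun m _ => ?_
        rw [mul_pow]; ring
    rw [e, abs_mul, abs_of_pos (Real.exp_pos _), abs_of_pos (Real.exp_pos _)]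
    have h1 := exp_tail (k * (τ - t)) M
    have h2 : |(k : ℝ) * (τ - t)| = k * |t - τ| := by
      rw [abs_mul, abs_sub_comm, abs_of_nonneg (Nat.cast_nonneg k)]
    rw [h2] at h1
    have h3 := hS t ht k hk
    have ht0 := hS0 t ht
    calc _ ≤ Real.exp (-(k * τ)) * ((1 / 2) ^ M * Real.exp (2 * (k * |t - τ|))) := by gcongr
      _ = (1 / 2) ^ M * Real.exp (-(k * τ) + 2 * (k * |t - τ|)) := by rw [Real.exp_add]; ring
      _ ≤ (1 / 2) ^ M * Real.exp (1 - k * t / 2) := by gcongr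
      _ = (1 / 2) ^ M * Real.exp 1 * Real.exp (- (k * t / 2)) := by
        rw [sub_eq_add_neg, Real.exp_add]; ring
      _ ≤ ε * Real.exp (-t) ^ (k / 2) := by
        rw [← Real.exp_nat_mul]
        have : ((k / 2 : ℕ) : ℝ) ≤ k / 2 := Nat.cast_div_le
        have : ((k / 2 : ℕ) : ℝ) * t ≤ k / 2 * t := by gcongr
        have : Real.exp (-(k * t / 2)) ≤ Real.exp (((k / 2 : ℕ) : ℝ) * -t) := by
          gcongr; linarith
        have p := Real.exp_pos (-(k * t / 2))
        have q : 0 ≤ ε := le_trans (by positivity) hM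
        gcongr

lemma app_buckets {n M : ℕ} {ε : ℝ} (hn : 0 < n) (hM : (1 / 2 : ℝ) ^ M * Real.exp 1 ≤ ε)
    (B : ℕ) : AppR n ε {y | ∃ t ∈ Set.Icc (0 : ℝ) (1 / (5 * n) * (3 / 2) ^ B),
      y = Real.exp (-t)} ((B + 1) * M) := by
  have hn' : (0 : ℝ) < n := by exact_mod_cast hn
  induction B with
  | zero =>
    rw [zero_add, one_mul]
    refine app_taylor (τ := 0) _ hM ?_ (fun t ht => ht.1)
    rintro t ⟨h0, h1⟩ k hk
    rw [sub_zero, abs_of_nonneg h0]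
    have hk' : (k : ℝ) ≤ 2 * n := by exact_mod_cast hk
    have : (k : ℝ) * t ≤ 2 * n * (1 / (5 * n) * (3 / 2) ^ 0) := by gcongr
    have e : 2 * (n : ℝ) * (1 / (5 * n) * (3 / 2) ^ 0) = 2 / 5 := by field_simp
    rw [e] at this
    linarith
  | succ B ih =>
    set T := 1 / (5 * (n : ℝ)) * (3 / 2) ^ B with hT
    have hT0 : 0 < T := by positivity
    have e : 1 / (5 * (n : ℝ)) * (3 / 2) ^ (B + 1) = 3 / 2 * T := by rw [hT]; ring
    rw [e]
    have h2 : AppR n ε {y | ∃ t ∈ Set.Icc T (3 / 2 * T), y = Real.exp (-t)} M := by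
      refine app_taylor (τ := 5 / 4 * T) _ hM ?_ (fun t ht => hT0.le.trans ht.1)
      rintro t ⟨h0, h1⟩ k hk
      have : |t - 5 / 4 * T| ≤ T / 4 := by rw [abs_le]; constructor <;> linarith
      have hk0 : (0 : ℝ) ≤ k := Nat.cast_nonneg k
      have : (k : ℝ) * |t - 5 / 4 * T| ≤ k * (T / 4) := by gcongr
      have : (k : ℝ) * t ≤ k * (3 / 2 * T) := by gcongr
      linarith
    have h3 := ih.union h2
    rw [show (B + 1 + 1) * M = (B + 1) * M + M by ring]
    refine h3.mono ?_
    rintro y ⟨t, ⟨ht0, ht1⟩, rfl⟩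
    rcases le_total t T with h | h
    · exact Or.inl ⟨t, ⟨ht0, h⟩, rfl⟩
    · exact Or.inr ⟨t, ⟨h, ht1⟩, rfl⟩

lemma app_all {n M B : ℕ} {ε : ℝ} (hn : 0 < n) (hM : (1 / 2 : ℝ) ^ M * Real.exp 1 ≤ ε)
    (hB : 10 * (n : ℝ) ≤ (3 / 2) ^ B) :
    AppR n ε {y | 0 < |y| ∧ |y| < 1} (2 * ((B + 2) * M)) := by
  have hn' : (0 : ℝ) < n := by exact_mod_cast hn
  have hM' : (1 / 2 : ℝ) ^ M ≤ ε := le_trans (le_mul_of_one_le_right (by positivity)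
    (Real.one_le_exp (by norm_num))) hM
  have h1 := (app_buckets hn hM B).union (app_tail (n := n) hM')
  have h2 : AppR n ε {y | 0 < y ∧ y < 1} ((B + 1) * M + M) := by
    refine h1.mono ?_
    rintro y ⟨hy, hy'⟩
    rcases le_total y (1 / 4) with h | h
    · exact Or.inr ⟨hy, h⟩
    · refine Or.inl ⟨-Real.log y, ⟨?_, ?_⟩, ?_⟩
      · have := Real.log_neg hy hy'; linarith
      · have a1 : Real.log (1 / 4) ≤ Real.log y := Real.log_le_log (by norm_num) h
        have a2 : Real.log (1 / 4) = - (2 * Real.log 2) := by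
          rw [show (1 / 4 : ℝ) = (2 ^ 2)⁻¹ by norm_num, Real.log_inv, Real.log_pow]; norm_num
        have a3 := Real.log_two_lt_d9
        have a4 : (2 : ℝ) = 1 / (5 * n) * (10 * n) := by field_simp; norm_num
        have a5 : (2 : ℝ) ≤ 1 / (5 * n) * (3 / 2) ^ B := by
          refine a4.le.trans ?_
          gcongr
        linarith
      · rw [neg_neg, Real.exp_log hy]
  have h3 := h2.union h2.neg
  rw [show 2 * ((B + 2) * M) = ((B + 1) * M + M) + ((B + 1) * M + M) by ring]
  refine h3.mono ?_
  rintro y ⟨hy, hy'⟩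
  rcases lt_or_gt_of_ne (abs_pos.1 hy) with h | h
  · rw [abs_of_neg h] at hy hy'
    exact Or.inr ⟨hy, hy'⟩
  · rw [abs_of_pos h] at hy hy'
    exact Or.inl ⟨hy, hy'⟩

lemma exists_pow (u : ℝ) (hu : 2 ≤ u) : ∃ M : ℕ, 1 ≤ M ∧ 16 * u ≤ 2 ^ M ∧
    (M : ℝ) ≤ 10 * Real.log u := by
  have l2 := Real.log_two_gt_d9
  have hL : Real.log 2 ≤ Real.log u := Real.log_le_log (by norm_num) hu
  refine ⟨⌈8 * Real.log u⌉₊, ?_, ?_, ?_⟩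
  · rw [Nat.one_le_ceil_iff]; linarith
  · have h1 : 8 * Real.log u ≤ (⌈8 * Real.log u⌉₊ : ℝ) := Nat.le_ceil _
    rw [← Real.log_le_log_iff (by positivity) (by positivity), Real.log_mul (by norm_num)
      (by positivity), Real.log_pow, show (16 : ℝ) = 2 ^ 4 by norm_num, Real.log_pow]
    push_cast
    nlinarith
  · have := Nat.ceil_lt_add_one (a := 8 * Real.log u) (by linarith)
    linarith

lemma euclNorm_sq {n : ℕ} (x : Fin n → ℝ) : euclNorm x ^ 2 = ∑ i, x i ^ 2 :=
  Real.sq_sqrt (Finset.sum_nonneg fun _ _ => sq_nonneg _)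

lemma euclNorm_nonneg {n : ℕ} (x : Fin n → ℝ) : 0 ≤ euclNorm x := Real.sqrt_nonneg _

lemma mulVec_le_fro {n : ℕ} (A : Matrix (Fin n) (Fin n) ℝ) (x : Fin n → ℝ) :
    euclNorm (A.mulVec x) ≤ froNorm A * euclNorm x := by
  unfold euclNorm froNorm
  rw [← Real.sqrt_mul (show 0 ≤ ∑ i, ∑ j, A i j ^ 2 by positivity)]
  apply Real.sqrt_le_sqrt
  rw [Finset.sum_mul]
  refine Finset.sum_le_sum fun i _ => ?_
  exact Finset.sum_mul_sq_le_sq_mul_sq Finset.univ (fun j => A i j) x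

lemma specNorm_bdd {n : ℕ} (A : Matrix (Fin n) (Fin n) ℝ) :
    BddAbove (Set.range fun x : {x : Fin n → ℝ // euclNorm x ≤ 1} => euclNorm (A.mulVec x.1)) := by
  refine ⟨froNorm A, ?_⟩
  rintro _ ⟨x, rfl⟩
  refine (mulVec_le_fro A x.1).trans ?_
  exact mul_le_of_le_one_right (Real.sqrt_nonneg _) x.2

lemma specNorm_nonneg {n : ℕ} (A : Matrix (Fin n) (Fin n) ℝ) : 0 ≤ specNorm A :=
  Real.iSup_nonneg fun _ => euclNorm_nonneg _

lemma euclNorm_smul {n : ℕ} (c : ℝ) (hc : 0 ≤ c) (x : Fin n → ℝ) :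
    euclNorm (c • x) = c * euclNorm x := by
  unfold euclNorm
  simp only [Pi.smul_apply, smul_eq_mul, mul_pow, ← Finset.mul_sum]
  rw [Real.sqrt_mul (sq_nonneg c), Real.sqrt_sq hc]

lemma mulVec_le_spec {n : ℕ} (A : Matrix (Fin n) (Fin n) ℝ) (x : Fin n → ℝ) :
    euclNorm (A.mulVec x) ≤ specNorm A * euclNorm x := by
  rcases (euclNorm_nonneg x).eq_or_lt with h | h
  · have := mulVec_le_fro A x
    rw [← h] at this ⊢
    simpa using this
  · have h1 : euclNorm ((euclNorm x)⁻¹ • x) ≤ 1 := by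
      rw [euclNorm_smul _ (by positivity), inv_mul_cancel₀ h.ne']
    have h2 := le_ciSup (specNorm_bdd A) ⟨_, h1⟩
    simp only [Matrix.mulVec_smul] at h2
    rw [euclNorm_smul _ (by positivity)] at h2
    change _ ≤ specNorm A at h2
    rwa [inv_mul_le_iff₀ h, mul_comm] at h2

lemma dot_le {n : ℕ} (x y : Fin n → ℝ) : ∑ i, x i * y i ≤ euclNorm x * euclNorm y :=
  Real.sum_mul_le_sqrt_mul_sqrt _ _ _

lemma quad_le_spec {n : ℕ} (A : Matrix (Fin n) (Fin n) ℝ) (x : Fin n → ℝ) :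
    ∑ i, ∑ j, x i * x j * A i j ≤ specNorm A * ∑ i, x i ^ 2 := by
  have h1 := dot_le x (A.mulVec x)
  have h2 := mulVec_le_spec A x
  have e : ∑ i, x i * A.mulVec x i = ∑ i, ∑ j, x i * x j * A i j := by
    refine Finset.sum_congr rfl fun i _ => ?_
    simp only [Matrix.mulVec, dotProduct, Finset.mul_sum]
    exact Finset.sum_congr rfl fun j _ => by ring
  rw [← e, ← euclNorm_sq]
  have := mul_le_mul_of_nonneg_left h2 (euclNorm_nonneg x)
  nlinarith

lemma spec_le_of_bilin {n : ℕ} (A : Matrix (Fin n) (Fin n) ℝ) (c : ℝ) (hc : 0 ≤ c)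
    (h : ∀ x y : Fin n → ℝ, ∑ i, ∑ j, |x i| * |y j| * |A i j| ≤ c * (euclNorm x * euclNorm y)) :
    specNorm A ≤ c := by
  refine Real.iSup_le (fun x => ?_) hc
  obtain ⟨x, hx⟩ := x
  have h1 := h (A.mulVec x) x
  have h2 : euclNorm (A.mulVec x) ^ 2 ≤
      ∑ i, ∑ j, |A.mulVec x i| * |x j| * |A i j| := by
    rw [euclNorm_sq]
    refine Finset.sum_le_sum fun i _ => ?_
    rw [← sq_abs, sq]
    have : |A.mulVec x i| ≤ ∑ j, |x j| * |A i j| := by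
      simp only [Matrix.mulVec, dotProduct]
      refine (Finset.abs_sum_le_sum_abs _ _).trans (le_of_eq ?_)
      exact Finset.sum_congr rfl fun j _ => by rw [abs_mul, mul_comm]
    refine (mul_le_mul_of_nonneg_left this (abs_nonneg _)).trans (le_of_eq ?_)
    rw [Finset.mul_sum]
    exact Finset.sum_congr rfl fun j _ => by ring
  change euclNorm (A.mulVec x) ≤ c
  rcases (euclNorm_nonneg (A.mulVec x)).eq_or_lt with h3 | h3
  · rw [← h3]; exact hc
  · have h4 : c * (euclNorm (A.mulVec x) * euclNorm x) ≤ c * euclNorm (A.mulVec x) := by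
      gcongr
      exact mul_le_of_le_one_right h3.le hx
    refine le_of_mul_le_mul_right ?_ h3
    nlinarith

lemma sum_comp_le {n : ℕ} (e : Fin n → Fin n)
    (he : ∀ b, (Finset.univ.filter fun a => e a = b).card ≤ 2) (g : Fin n → ℝ)
    (hg : ∀ i, 0 ≤ g i) : ∑ i, g (e i) ≤ 2 * ∑ i, g i := by
  rw [← Finset.sum_fiberwise Finset.univ e (fun i => g (e i)), Finset.mul_sum]
  refine Finset.sum_le_sum fun b _ => ?_
  rw [Finset.sum_congr rfl (g := fun _ => g b)
    (fun i hi => by rw [(Finset.mem_filter.1 hi).2]), Finset.sum_const, nsmul_eq_mul]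
  have : ((Finset.univ.filter fun a => e a = b).card : ℝ) ≤ 2 := by exact_mod_cast he b
  exact mul_le_mul_of_nonneg_right this (hg b)

/-- quadratic bound with folded coordinates -/
lemma quad_fold {n : ℕ} (X : Finset ℝ) (b : ℝ → ℝ) (hb : ∀ x ∈ X, 0 < b x)
    (p : ℝ → Fin n → ℝ) (s : Fin n → ℝ) (hs : ∀ i, s i ^ 2 = 1)
    (hp : ∀ x ∈ X, (∀ i, |p x i| = p x i) ∨ (∀ i, |p x i| = s i * p x i))
    (e : Fin n → Fin n) (he : ∀ b, (Finset.univ.filter fun a => e a = b).card ≤ 2)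
    (H : Matrix (Fin n) (Fin n) ℝ) (hH : ∀ i j, H i j = ∑ x ∈ X, b x * (p x i * p x j))
    (v : Fin n → ℝ) :
    ∑ x ∈ X, b x * (∑ i, |v i| * |p x (e i)|) ^ 2 ≤ 4 * specNorm H * ∑ i, v i ^ 2 := by
  set u : Fin n → ℝ := fun i' => ∑ i ∈ Finset.univ.filter (fun a => e a = i'), |v i| with hu
  have hA : ∀ x, ∑ i, |v i| * |p x (e i)| = ∑ i, u i * |p x i| := by
    intro x
    rw [← Finset.sum_fiberwise Finset.univ e (fun i => |v i| * |p x (e i)|)]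
    refine Finset.sum_congr rfl fun i' _ => ?_
    rw [hu]
    simp only [Finset.sum_mul]
    exact Finset.sum_congr rfl fun i hi => by rw [(Finset.mem_filter.1 hi).2]
  have hun : ∑ i, u i ^ 2 ≤ 2 * ∑ i, v i ^ 2 := by
    rw [← Finset.sum_fiberwise Finset.univ e (fun i => v i ^ 2), Finset.mul_sum]
    refine Finset.sum_le_sum fun i' _ => ?_
    have h1 := sq_sum_le_card_mul_sum_sq (s := Finset.univ.filter (fun a => e a = i'))
      (f := fun i => |v i|)
    simp only [sq_abs] at h1
    refine h1.trans ?_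
    have : ((Finset.univ.filter fun a => e a = i').card : ℝ) ≤ 2 := by exact_mod_cast he i'
    exact mul_le_mul_of_nonneg_right this (Finset.sum_nonneg fun i _ => sq_nonneg _)
  have hq : ∀ w : Fin n → ℝ, ∑ x ∈ X, b x * (∑ i, w i * p x i) ^ 2 ≤
      specNorm H * ∑ i, w i ^ 2 := by
    intro w
    refine le_trans (le_of_eq ?_) (quad_le_spec H w)
    simp only [hH, sq, Finset.sum_mul_sum]
    simp only [Finset.mul_sum]
    rw [Finset.sum_comm]
    refine Finset.sum_congr rfl fun i _ => ?_
    rw [Finset.sum_comm]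
    refine Finset.sum_congr rfl fun j _ => Finset.sum_congr rfl fun x _ => ?_
    ring
  have h1 := hq u
  have h2 := hq (fun i => s i * u i)
  simp only [mul_pow, hs, one_mul] at h2
  have h3 : ∑ x ∈ X, b x * (∑ i, |v i| * |p x (e i)|) ^ 2 ≤
      ∑ x ∈ X, (b x * (∑ i, u i * p x i) ^ 2 + b x * (∑ i, s i * u i * p x i) ^ 2) := by
    refine Finset.sum_le_sum fun x hx => ?_
    rw [hA]
    have hbx := hb x hx
    rcases hp x hx with h | h
    · simp only [h]
      have : 0 ≤ b x * (∑ i, s i * u i * p x i) ^ 2 := by positivity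
      linarith
    · have e1 : ∑ i, u i * |p x i| = ∑ i, s i * u i * p x i :=
        Finset.sum_congr rfl fun i _ => by rw [h]; ring
      rw [e1]
      have : 0 ≤ b x * (∑ i, u i * p x i) ^ 2 := by positivity
      linarith
  rw [Finset.sum_add_distrib] at h3
  have := mul_le_mul_of_nonneg_left hun (specNorm_nonneg H)
  linarith

lemma fro_mono {n : ℕ} (X S : Finset ℝ) (hS : S ⊆ X) (b : ℝ → ℝ) (hb : ∀ x ∈ X, 0 < b x)
    (p : ℝ → Fin n → ℝ) :
    ∑ i, ∑ j, (∑ x ∈ S, b x * (p x i * p x j)) ^ 2 ≤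
      ∑ i, ∑ j, (∑ x ∈ X, b x * (p x i * p x j)) ^ 2 := by
  have key : ∀ T : Finset ℝ, ∑ i, ∑ j, (∑ x ∈ T, b x * (p x i * p x j)) ^ 2 =
      ∑ x ∈ T, ∑ y ∈ T, b x * b y * (∑ i, p x i * p y i) ^ 2 := by
    intro T
    simp only [sq, Finset.sum_mul_sum]
    simp only [Finset.mul_sum]
    refine Eq.trans (Finset.sum_congr rfl fun i _ => Finset.sum_comm) ?_
    rw [Finset.sum_comm]
    refine Finset.sum_congr rfl fun x _ => ?_
    refine Eq.trans (Finset.sum_congr rfl fun i _ => Finset.sum_comm) ?_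
    rw [Finset.sum_comm]
    refine Finset.sum_congr rfl fun y _ => Finset.sum_congr rfl fun i _ =>
      Finset.sum_congr rfl fun j _ => ?_
    ring
  rw [key, key]
  have nn : ∀ x ∈ X, ∀ y ∈ X, 0 ≤ b x * b y * (∑ i, p x i * p y i) ^ 2 := by
    intro x hx y hy
    have := hb x hx
    have := hb y hy
    positivity
  calc _ ≤ ∑ x ∈ S, ∑ y ∈ X, b x * b y * (∑ i, p x i * p y i) ^ 2 :=
        Finset.sum_le_sum fun x hx => Finset.sum_le_sum_of_subset_of_nonneg hS
          fun y hy _ => nn x (hS hx) y hy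
    _ ≤ _ := Finset.sum_le_sum_of_subset_of_nonneg hS
          fun x hx _ => Finset.sum_nonneg fun y hy => nn x hx y hy

lemma fro_abs {n : ℕ} (X : Finset ℝ) (b : ℝ → ℝ) (hb : ∀ x ∈ X, 0 < b x)
    (p : ℝ → Fin n → ℝ) (s : Fin n → ℝ) (hs : ∀ i, s i ^ 2 = 1)
    (hp : ∀ x ∈ X, (∀ i, |p x i| = p x i) ∨ (∀ i, |p x i| = s i * p x i)) :
    ∑ i, ∑ j, (∑ x ∈ X, b x * (|p x i| * |p x j|)) ^ 2 ≤
      4 * ∑ i, ∑ j, (∑ x ∈ X, b x * (p x i * p x j)) ^ 2 := by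
  set S := X.filter (fun x => ∀ i, |p x i| = p x i) with hS
  set S' := X.filter (fun x => ¬ ∀ i, |p x i| = p x i) with hS'
  have h1 := fro_mono X S (Finset.filter_subset _ _) b hb p
  have h2 := fro_mono X S' (Finset.filter_subset _ _) b hb p
  have h3 : ∑ i, ∑ j, (∑ x ∈ X, b x * (|p x i| * |p x j|)) ^ 2 ≤
      ∑ i, ∑ j, (2 * (∑ x ∈ S, b x * (p x i * p x j)) ^ 2 +
        2 * (∑ x ∈ S', b x * (p x i * p x j)) ^ 2) := by
    refine Finset.sum_le_sum fun i _ => Finset.sum_le_sum fun j _ => ?_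
    rw [← Finset.sum_filter_add_sum_filter_not X (fun x => ∀ i, |p x i| = p x i)]
    rw [← hS, ← hS']
    have e1 : ∑ x ∈ S, b x * (|p x i| * |p x j|) = ∑ x ∈ S, b x * (p x i * p x j) :=
      Finset.sum_congr rfl fun x hx => by
        have := (Finset.mem_filter.1 hx).2
        rw [this, this]
    have e2 : ∑ x ∈ S', b x * (|p x i| * |p x j|) =
        s i * s j * ∑ x ∈ S', b x * (p x i * p x j) := by
      rw [Finset.mul_sum]
      refine Finset.sum_congr rfl fun x hx => ?_
      have h' := Finset.mem_filter.1 hx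
      have := (hp x h'.1).resolve_left h'.2
      rw [this, this]; ring
    rw [e1, e2]
    set P := ∑ x ∈ S, b x * (p x i * p x j)
    set Q := ∑ x ∈ S', b x * (p x i * p x j)
    have e3 : (s i * s j * Q) ^ 2 = Q ^ 2 := by rw [mul_pow, mul_pow, hs, hs]; ring
    nlinarith [sq_nonneg (P - s i * s j * Q)]
  simp only [Finset.sum_add_distrib, ← Finset.mul_sum] at h3
  linarith

lemma norms_le {n : ℕ} (X : Finset ℝ) (b : ℝ → ℝ) (hb : ∀ x ∈ X, 0 < b x)
    (p : ℝ → Fin n → ℝ) (s : Fin n → ℝ) (hs : ∀ i, s i ^ 2 = 1)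
    (hp : ∀ x ∈ X, (∀ i, |p x i| = p x i) ∨ (∀ i, |p x i| = s i * p x i))
    (e : Fin n → Fin n) (he : ∀ b, (Finset.univ.filter fun a => e a = b).card ≤ 2)
    (H : Matrix (Fin n) (Fin n) ℝ) (hH : ∀ i j, H i j = ∑ x ∈ X, b x * (p x i * p x j))
    (E : Matrix (Fin n) (Fin n) ℝ) (c : ℝ) (hc : 0 ≤ c)
    (hE : ∀ i j, |E i j| ≤ c * ∑ x ∈ X, b x * (|p x (e i)| * |p x (e j)|)) :
    specNorm E ≤ 4 * c * specNorm H ∧ froNorm E ≤ 4 * c * froNorm H := by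
  constructor
  · refine spec_le_of_bilin E _ (mul_nonneg (by positivity) (specNorm_nonneg H)) fun v w => ?_
    have hv := quad_fold X b hb p s hs hp e he H hH v
    have hw := quad_fold X b hb p s hs hp e he H hH w
    set A : ℝ → ℝ := fun x => ∑ i, |v i| * |p x (e i)| with hA
    set B : ℝ → ℝ := fun x => ∑ i, |w i| * |p x (e i)| with hB
    have h1 : ∑ i, ∑ j, |v i| * |w j| * |E i j| ≤ c * ∑ x ∈ X, b x * (A x * B x) := by
      calc _ ≤ ∑ i, ∑ j, |v i| * |w j| * (c * ∑ x ∈ X, b x * (|p x (e i)| * |p x (e j)|)) := by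
            refine Finset.sum_le_sum fun i _ => Finset.sum_le_sum fun j _ => ?_
            exact mul_le_mul_of_nonneg_left (hE i j) (by positivity)
        _ = _ := by
            simp only [hA, hB, Finset.sum_mul_sum]
            simp only [Finset.mul_sum]
            rw [Finset.sum_comm (s := X)]
            refine Finset.sum_congr rfl fun i _ => ?_
            rw [Finset.sum_comm (s := X)]
            refine Finset.sum_congr rfl fun j _ => Finset.sum_congr rfl fun x _ => ?_
            ring
    have h2 : (∑ x ∈ X, b x * (A x * B x)) ^ 2 ≤
        (∑ x ∈ X, b x * A x ^ 2) * (∑ x ∈ X, b x * B x ^ 2) := by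
      refine Finset.sum_sq_le_sum_mul_sum_of_sq_le_mul X (fun x hx => ?_) (fun x hx => ?_)
        (fun x hx => ?_)
      · exact mul_nonneg (hb x hx).le (sq_nonneg _)
      · exact mul_nonneg (hb x hx).le (sq_nonneg _)
      · exact le_of_eq (by ring)
    have h3 : ∑ x ∈ X, b x * (A x * B x) ≤ 4 * specNorm H * (euclNorm v * euclNorm w) := by
      have n1 := euclNorm_nonneg v
      have n2 := euclNorm_nonneg w
      have n3 := specNorm_nonneg H
      refine (fun h => (abs_le_of_sq_le_sq' h (by positivity)).2) ?_
      refine h2.trans ?_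
      rw [← euclNorm_sq] at hv hw
      calc _ ≤ (4 * specNorm H * euclNorm v ^ 2) * (4 * specNorm H * euclNorm w ^ 2) := by
            refine mul_le_mul hv hw ?_ (by positivity)
            exact Finset.sum_nonneg fun x hx => mul_nonneg (hb x hx).le (sq_nonneg _)
        _ = _ := by ring
    have := mul_le_mul_of_nonneg_left h3 hc
    linarith
  · have h0 : ∑ i, ∑ j, E i j ^ 2 ≤ (4 * c) ^ 2 * ∑ i, ∑ j, H i j ^ 2 := by
      set P : Fin n → Fin n → ℝ := fun i j => ∑ x ∈ X, b x * (|p x i| * |p x j|) with hP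
      have h1 := fro_abs X b hb p s hs hp
      simp only [← hH] at h1
      calc ∑ i, ∑ j, E i j ^ 2 ≤ ∑ i, ∑ j, (c * P (e i) (e j)) ^ 2 := by
            refine Finset.sum_le_sum fun i _ => Finset.sum_le_sum fun j _ => ?_
            rw [← sq_abs (E i j)]
            exact pow_le_pow_left₀ (abs_nonneg _) (hE i j) 2
        _ = c ^ 2 * ∑ i, ∑ j, P (e i) (e j) ^ 2 := by
            simp only [mul_pow, Finset.mul_sum]
        _ ≤ c ^ 2 * ∑ i, 2 * ∑ j, P (e i) j ^ 2 := by
            gcongr with i hi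
            exact sum_comp_le e he (fun j => P (e i) j ^ 2) fun j => sq_nonneg _
        _ ≤ c ^ 2 * (2 * ∑ i, 2 * ∑ j, P i j ^ 2) := by
            gcongr
            exact sum_comp_le e he (fun i => 2 * ∑ j, P i j ^ 2) fun i => by positivity
        _ = c ^ 2 * 4 * ∑ i, ∑ j, P i j ^ 2 := by rw [← Finset.mul_sum]; ring
        _ ≤ c ^ 2 * 4 * (4 * ∑ i, ∑ j, H i j ^ 2) := by gcongr
        _ = _ := by ring
    unfold froNorm
    refine (Real.sqrt_le_sqrt h0).trans ?_
    rw [Real.sqrt_mul (sq_nonneg _), Real.sqrt_sq (by positivity)]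

/-- The existence result for PSD Hankel matrices `H = V_X D_X V_Xᵀ` whose
nodes all satisfy `|x| > 1`. -/
theorem nodes_gt_one_low_rank :
    ∃ C : ℝ, 0 < C ∧
      ∀ (n : ℕ), 2 ≤ n → ∀ ε : ℝ, 0 < ε → ε < 1 / 2 →
        ∀ (X : Finset ℝ) (a : ℝ → ℝ),
          (∀ x ∈ X, 1 < |x|) → (∀ x ∈ X, 0 < a x) →
          ∀ H : Matrix (Fin n) (Fin n) ℝ, H = vdvT n X a → H.PosSemidef → IsHankel H →
            ∃ Hhat : Matrix (Fin n) (Fin n) ℝ, IsHankel Hhat ∧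
              (Hhat.rank : ℝ) ≤ C * Real.log n * Real.log (1 / ε) ∧
              specNorm (H - Hhat) ≤ ε * specNorm H ∧
              froNorm (H - Hhat) ≤ ε * froNorm H := by
  refine ⟨800, by norm_num, ?_⟩
  intro n hn ε hε hε2 X a hX ha H hH _ _
  have hn2 : (2 : ℝ) ≤ n := by exact_mod_cast hn
  have hu : (2 : ℝ) ≤ 1 / ε := by
    rw [le_div_iff₀ hε]; linarith
  obtain ⟨M, hM1, hM2, hM3⟩ := exists_pow (1 / ε) hu
  obtain ⟨B, hB1, hB2, hB3⟩ := exists_pow n hn2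
  have hMe : (1 / 2 : ℝ) ^ M * Real.exp 1 ≤ ε / 4 := by
    have e1 := Real.exp_one_lt_d9
    have h2 : (0 : ℝ) < 2 ^ M := by positivity
    rw [one_div, inv_pow, inv_mul_le_iff₀ h2]
    have h3 : 16 * (1 / ε) * (ε / 4) ≤ 2 ^ M * (ε / 4) := by gcongr
    have h4 : 16 * (1 / ε) * (ε / 4) = 4 := by field_simp; norm_num
    linarith
  have hBe : 10 * (n : ℝ) ≤ (3 / 2) ^ (2 * B) := by
    rw [pow_mul]
    have : (2 : ℝ) ^ B ≤ ((3 / 2) ^ 2) ^ B := by gcongr; norm_num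
    linarith
  obtain ⟨W, hW1, hW2⟩ := app_all (by omega : 0 < n) hMe hBe
  have hy : ∀ x ∈ X, x⁻¹ ∈ {y : ℝ | 0 < |y| ∧ |y| < 1} := by
    intro x hx
    have := hX x hx
    have h0 : 0 < |x| := by linarith
    simp only [Set.mem_ofPred_eq, abs_inv]
    exact ⟨by positivity, inv_lt_one_of_one_lt₀ this⟩
  choose! f hf1 hf2 using fun x (hx : x ∈ X) => hW2 x⁻¹ (hy x hx)
  set b : ℝ → ℝ := fun x => a x * x ^ (2 * (n - 1)) with hb
  have hx0 : ∀ x ∈ X, x ≠ 0 := by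
    intro x hx h
    have := hX x hx
    rw [h] at this; norm_num at this
  have hbpos : ∀ x ∈ X, 0 < b x := by
    intro x hx
    have h1 := ha x hx
    have : 0 < x ^ (2 * (n - 1)) := by
      rw [pow_mul]
      have := hx0 x hx
      positivity
    exact mul_pos h1 this
  set p : ℝ → Fin n → ℝ := fun x i => x⁻¹ ^ (i.rev : ℕ) with hp
  have hHe : ∀ i j, H i j = ∑ x ∈ X, b x * (p x i * p x j) := by
    intro i j
    rw [hH, vdvT, Matrix.mul_apply]
    simp only [Matrix.mul_diagonal, vandermondeX, Matrix.of_apply, Matrix.transpose_apply]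
    rw [Finset.sum_coe_sort X (fun x => x ^ (i : ℕ) * a x * x ^ (j : ℕ))]
    refine Finset.sum_congr rfl fun x hx => ?_
    have hx' := hx0 x hx
    simp only [hb, hp, inv_pow]
    have e1 : x ^ (2 * (n - 1)) = x ^ (i : ℕ) * x ^ (i.rev : ℕ) * (x ^ (j : ℕ) * x ^ (j.rev : ℕ)) := by
      simp only [← pow_add, Fin.val_rev]
      congr 1
      have := i.2
      have := j.2
      omega
    rw [e1]
    field_simp
  set s : Fin n → ℝ := fun i => (-1) ^ (i.rev : ℕ) with hs
  have hs2 : ∀ i, s i ^ 2 = 1 := by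
    intro i
    simp only [hs]
    rw [← pow_mul, mul_comm, pow_mul]; norm_num
  have hps : ∀ x ∈ X, (∀ i, |p x i| = p x i) ∨ (∀ i, |p x i| = s i * p x i) := by
    intro x hx
    rcases lt_or_gt_of_ne (hx0 x hx) with h | h
    · right
      intro i
      simp only [hp, hs]
      rw [abs_pow, abs_of_neg (inv_lt_zero.2 h), ← mul_pow, neg_one_mul]
    · left
      intro i
      simp only [hp]
      exact abs_of_pos (by positivity)
  set e : Fin n → Fin n := fun i =>
    Fin.rev ⟨(i.rev : ℕ) / 2, lt_of_le_of_lt (Nat.div_le_self _ _) i.rev.2⟩ with he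
  have hev : ∀ i, ((e i).rev : ℕ) = (i.rev : ℕ) / 2 := by
    intro i; simp only [he, Fin.rev_rev]
  have hcard : ∀ c, (Finset.univ.filter fun i => e i = c).card ≤ 2 := by
    intro c
    have : ((Finset.univ.filter fun i => e i = c).image fun i => (i.rev : ℕ)) ⊆
        {2 * (c.rev : ℕ), 2 * (c.rev : ℕ) + 1} := by
      intro k hk
      obtain ⟨i, hi, rfl⟩ := Finset.mem_image.1 hk
      have h1 := (Finset.mem_filter.1 hi).2
      have h2 := hev i
      rw [h1] at h2
      simp only [Finset.mem_insert, Finset.mem_singleton]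
      omega
    rw [← Finset.card_image_of_injective _
      (fun i j h => Fin.rev_injective (Fin.ext h) : Function.Injective fun i : Fin n => (i.rev : ℕ))]
    exact (Finset.card_le_card this).trans Finset.card_le_two
  set g : ℕ → ℝ := ∑ x ∈ X, b x • f x with hg
  have hgW : g ∈ W := W.sum_mem fun x hx => W.smul_mem _ (hf1 x hx)
  have hE : ∀ i j, |(H - hkm n g) i j| ≤
      ε / 4 * ∑ x ∈ X, b x * (|p x (e i)| * |p x (e j)|) := by
    intro i j
    have e1 : (H - hkm n g) i j = ∑ x ∈ X, b x * (x⁻¹ ^ ((i.rev : ℕ) + (j.rev : ℕ)) -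
        f x ((i.rev : ℕ) + (j.rev : ℕ))) := by
      rw [Matrix.sub_apply, hHe]
      simp only [hkm, Matrix.of_apply, hg, Finset.sum_apply, Pi.smul_apply, smul_eq_mul]
      rw [← Finset.sum_sub_distrib]
      refine Finset.sum_congr rfl fun x _ => ?_
      simp only [hp, pow_add]
      ring
    rw [e1, Finset.mul_sum]
    refine (Finset.abs_sum_le_sum_abs _ _).trans (Finset.sum_le_sum fun x hx => ?_)
    have hbx := hbpos x hx
    rw [abs_mul, abs_of_pos hbx, mul_left_comm]
    refine mul_le_mul_of_nonneg_left ?_ hbx.le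
    have hi := i.rev.2
    have hj := j.rev.2
    refine (hf2 x hx _ (by omega)).trans ?_
    refine mul_le_mul_of_nonneg_left ?_ (by positivity)
    simp only [hp, hev, abs_pow]
    rw [← pow_add]
    have := hy x hx
    exact pow_le_pow_of_le_one (abs_nonneg _) this.2.le (by omega)
  have hN := norms_le X b hbpos p s hs2 hps e hcard H hHe (H - hkm n g) (ε / 4)
    (by positivity) hE
  rw [show 4 * (ε / 4) = ε by ring] at hN
  refine ⟨hkm n g, ?_, ?_, hN.1, hN.2⟩
  · intro i j k l h
    simp only [hkm, Matrix.of_apply, Fin.val_rev]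
    congr 1
    omega
  · have h1 := hW1 g hgW
    have h2 : 2 * ((2 * B + 2) * M) ≤ 8 * (B * M) := by nlinarith
    have h3 : ((hkm n g).rank : ℝ) ≤ 8 * (B * M) := by exact_mod_cast h1.trans h2
    have h4 : (B : ℝ) * M ≤ (10 * Real.log n) * (10 * Real.log (1 / ε)) := by
      gcongr
    linarith
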